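/- Every unsatisfiable ℓ-disjoint (k,d)-CSP has more than (1/k)·(d^k/(e·d^{ℓ-1}·k))^{1+1/(ℓ-1)} constraints. -/

import Mathlib

/-!
Remove the frequent variables `X` from every constraint that has fewer than `ℓ` of them. Each pruned
constraint still has at least `k - ℓ + 1` variables. The degrees of infrequent variables did not
grow, and a frequent variable `v` survives only in constraints with at least `ℓ` variables in `X`.
By `ℓ`-disjointness these constraints are told apart by the `ℓ`-sets `B` with `v ∈ B ⊆ X` which they
contain, so there are at most `|X| ^ (ℓ - 1)` of them. If `X` is small, all degrees of the pruned
instance are therefore small and the Lovász local lemma satisfies it, hence also the original one.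
So an unsatisfiable instance has many frequent variables, and counting incidences between these and
the constraints gives the bound.
-/

section LocalLemma

open Finset MeasureTheory

lemma prod_mul_le_apply_union {ι : Type*} [DecidableEq ι] {q : Finset ι → ℝ} {y : ι → ℝ}
    (hy : ∀ i, 0 ≤ y i) {S T : Finset ι} (hST : Disjoint S T)
    (hq : ∀ R ⊂ S ∪ T, ∀ i ∈ T, i ∉ R → y i * q R ≤ q (insert i R)) :
    (∏ i ∈ T, y i) * q S ≤ q (S ∪ T) := by
  induction T using Finset.induction_on with
  | empty => simp
  | insert i T hi ih =>
    rw [disjoint_insert_right] at hST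
    have hi' : i ∉ S ∪ T := by simp [hST.1, hi]
    have hlt : S ∪ T ⊂ S ∪ insert i T := by
      rw [union_insert]
      exact ssubset_insert hi'
    calc (∏ j ∈ insert i T, y j) * q S = y i * ((∏ j ∈ T, y j) * q S) := by
          rw [prod_insert hi, mul_assoc]
      _ ≤ y i * q (S ∪ T) := by
          gcongr
          · exact hy i
          · exact ih hST.2 fun R hR j hj ↦ hq R (hR.trans hlt) j (mem_insert_of_mem hj)
      _ ≤ q (S ∪ insert i T) := by
          rw [union_insert]
          exact hq _ hlt i (mem_insert_self i T) hi'

variable {Ω ι : Type*} [MeasurableSpace Ω] {μ : Measure Ω} {A : ι → Set Ω} {Γ : ι → Finset ι}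

lemma measureReal_inter_add_biInter_insert_compl [IsFiniteMeasure μ] [DecidableEq ι]
    (i : ι) (hA : MeasurableSet (A i)) (S : Finset ι) :
    μ.real (A i ∩ ⋂ j ∈ S, (A j)ᶜ) + μ.real (⋂ j ∈ insert i S, (A j)ᶜ) =
      μ.real (⋂ j ∈ S, (A j)ᶜ) := by
  rw [set_biInter_insert, Set.inter_comm, Set.inter_comm (A i)ᶜ, ← Set.sdiff_eq]
  exact measureReal_inter_add_sdiff hA

lemma measureReal_inter_biInter_compl_le [IsFiniteMeasure μ] (hA : ∀ i, MeasurableSet (A i))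
    {x : ι → ℝ} (hx₀ : ∀ i, 0 ≤ x i) (hx₁ : ∀ i, x i ≤ 1)
    (hdep : ∀ i S, i ∉ S → Disjoint (Γ i) S → μ.real (A i ∩ ⋂ j ∈ S, (A j)ᶜ) ≤
      x i * (∏ j ∈ Γ i, (1 - x j)) * μ.real (⋂ j ∈ S, (A j)ᶜ))
    (S : Finset ι) {i : ι} (hi : i ∉ S) :
    μ.real (A i ∩ ⋂ j ∈ S, (A j)ᶜ) ≤ x i * μ.real (⋂ j ∈ S, (A j)ᶜ) := by
  classical
  induction S using Finset.strongInduction generalizing i with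
  | H S ih =>
    have hx (j : ι) : 0 ≤ 1 - x j := sub_nonneg.mpr (hx₁ j)
    have hprod : ∏ j ∈ Γ i, (1 - x j) ≤ ∏ j ∈ S ∩ Γ i, (1 - x j) :=
      prod_anti_set_of_le_one hx (fun j ↦ sub_le_self 1 (hx₀ j)) inter_subset_right
    have hchain : (∏ j ∈ S ∩ Γ i, (1 - x j)) * μ.real (⋂ j ∈ S \ Γ i, (A j)ᶜ) ≤
        μ.real (⋂ j ∈ S, (A j)ᶜ) := by
      have := prod_mul_le_apply_union (q := fun R ↦ μ.real (⋂ j ∈ R, (A j)ᶜ)) hx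
        (disjoint_sdiff_inter S (Γ i)) fun R hR j _ hjR ↦ by
          rw [sdiff_union_inter] at hR
          linarith [ih R hR hjR, measureReal_inter_add_biInter_insert_compl (μ := μ) j (hA j) R]
      rwa [sdiff_union_inter] at this
    calc μ.real (A i ∩ ⋂ j ∈ S, (A j)ᶜ)
        ≤ μ.real (A i ∩ ⋂ j ∈ S \ Γ i, (A j)ᶜ) :=
          measureReal_mono <| Set.inter_subset_inter_right _ <|
            Set.biInter_subset_biInter_left sdiff_subset
      _ ≤ x i * (∏ j ∈ Γ i, (1 - x j)) * μ.real (⋂ j ∈ S \ Γ i, (A j)ᶜ) :=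
          hdep i _ (fun h ↦ hi (mem_sdiff.mp h).1) disjoint_sdiff
      _ ≤ x i * (∏ j ∈ S ∩ Γ i, (1 - x j)) * μ.real (⋂ j ∈ S \ Γ i, (A j)ᶜ) := by
          gcongr
          exact hx₀ i
      _ ≤ x i * μ.real (⋂ j ∈ S, (A j)ᶜ) := by
          rw [mul_assoc]
          exact mul_le_mul_of_nonneg_left hchain (hx₀ i)

-- Independence of `A i` from the events outside `Γ i` enters only through the inequality `hdep`,
-- which makes this the lopsided version of Erdős and Spencer.
theorem lovasz_local_lemma [IsProbabilityMeasure μ] (hA : ∀ i, MeasurableSet (A i))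
    {x : ι → ℝ} (hx₀ : ∀ i, 0 ≤ x i) (hx₁ : ∀ i, x i ≤ 1)
    (hdep : ∀ i S, i ∉ S → Disjoint (Γ i) S → μ.real (A i ∩ ⋂ j ∈ S, (A j)ᶜ) ≤
      x i * (∏ j ∈ Γ i, (1 - x j)) * μ.real (⋂ j ∈ S, (A j)ᶜ))
    (S : Finset ι) : ∏ i ∈ S, (1 - x i) ≤ μ.real (⋂ i ∈ S, (A i)ᶜ) := by
  classical
  have := prod_mul_le_apply_union (q := fun R ↦ μ.real (⋂ j ∈ R, (A j)ᶜ))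
    (fun j ↦ sub_nonneg.mpr (hx₁ j)) (disjoint_empty_left S) fun R _ i _ hi ↦ by
      linarith [measureReal_inter_biInter_compl_le hA hx₀ hx₁ hdep R hi,
        measureReal_inter_add_biInter_insert_compl (μ := μ) i (hA i) R]
  simpa using this

lemma inv_exp_one_mul_le {n D : ℕ} (hn : n < D) :
    (Real.exp 1 * D)⁻¹ ≤ ((D : ℝ) + 1)⁻¹ * (1 - ((D : ℝ) + 1)⁻¹) ^ n := by
  have hD : (0 : ℝ) < D := by exact_mod_cast hn.pos
  have hr : 1 - ((D : ℝ) + 1)⁻¹ = (1 + (D : ℝ)⁻¹)⁻¹ := by field_simp; ring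
  calc (Real.exp 1 * D)⁻¹ ≤ ((1 + (D : ℝ)⁻¹) ^ D * D)⁻¹ := by
        gcongr
        exact Real.one_add_inv_pow_le_exp
    _ ≤ ((1 + (D : ℝ)⁻¹) ^ (n + 1) * D)⁻¹ := by
        gcongr
        · simp
        · exact hn
    _ = ((D : ℝ) + 1)⁻¹ * (1 - ((D : ℝ) + 1)⁻¹) ^ n := by
        rw [hr, inv_pow, ← mul_inv, pow_succ]
        congr 1
        field_simp

theorem lovasz_local_lemma_symmetric [IsProbabilityMeasure μ] (hA : ∀ i, MeasurableSet (A i))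
    {p : ℝ} {D : ℕ} (hΓ : ∀ i, #(Γ i) < D) (hp : Real.exp 1 * p * D ≤ 1)
    (hdep : ∀ i S, i ∉ S → Disjoint (Γ i) S →
      μ.real (A i ∩ ⋂ j ∈ S, (A j)ᶜ) ≤ p * μ.real (⋂ j ∈ S, (A j)ᶜ))
    (S : Finset ι) : 0 < μ.real (⋂ i ∈ S, (A i)ᶜ) := by
  -- `1 / (D + 1)` rather than the usual `1 / D`, which is not below `1` when `D = 1`.
  set x : ℝ := ((D : ℝ) + 1)⁻¹
  have hx₀ : 0 ≤ x := by positivity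
  have hx₁ : x ≤ 1 := inv_le_one_of_one_le₀ (by simp)
  have hpx (i : ι) : p ≤ x * ∏ _j ∈ Γ i, (1 - x) := by
    have hD : (0 : ℝ) < D := by exact_mod_cast (hΓ i).pos
    rw [prod_const]
    refine le_trans ?_ (inv_exp_one_mul_le (hΓ i))
    rwa [← one_div, le_div_iff₀ (by positivity), mul_left_comm, ← mul_assoc]
  refine lt_of_lt_of_le (prod_pos fun i _ ↦ ?_) (lovasz_local_lemma (x := fun _ ↦ x) hA
    (fun _ ↦ hx₀) (fun _ ↦ hx₁) (fun i S hi hS ↦ (hdep i S hi hS).trans ?_) S)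
  · have hD : (0 : ℝ) < D := by exact_mod_cast (hΓ i).pos
    exact sub_pos.mpr (inv_lt_one_of_one_lt₀ (by linarith))
  · gcongr
    exact hpx i

end LocalLemma

section ProductMeasure

open MeasureTheory Measure ProbabilityTheory

variable {V : Type*} {X : V → Type*}

lemma cylinder_image_restrict_of_dependsOn {A : Set (∀ v, X v)} {s : Finset V}
    (hA : DependsOn (· ∈ A) (s : Set V)) : cylinder s (s.restrict '' A) = A := by
  refine Set.Subset.antisymm ?_ (Set.subset_preimage_image _ _)
  rintro a ⟨b, hb, hab⟩
  have hA' : (b ∈ A) = (a ∈ A) := hA fun v hv ↦ congrFun hab ⟨v, hv⟩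
  exact hA' ▸ hb

lemma infinitePi_inter_of_dependsOn [∀ v, MeasurableSpace (X v)]
    [∀ v, Countable (X v)] [∀ v, MeasurableSingletonClass (X v)]
    (μ : ∀ v, Measure (X v)) [∀ v, IsProbabilityMeasure (μ v)]
    {A B : Set (∀ v, X v)} {s t : Finset V} (hst : Disjoint s t)
    (hA : DependsOn (· ∈ A) (s : Set V)) (hB : DependsOn (· ∈ B) (t : Set V)) :
    infinitePi μ (A ∩ B) = infinitePi μ A * infinitePi μ B := by
  have hindep := (iIndepFun_infinitePi (P := μ) (X := fun _ ↦ id)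
    fun _ ↦ measurable_id).indepFun_finset s t hst (by fun_prop)
  have := hindep.measure_inter_preimage_eq_mul (s.restrict '' A) (t.restrict '' B)
    (Set.to_countable _).measurableSet (Set.to_countable _).measurableSet
  rw [← cylinder_image_restrict_of_dependsOn hA, ← cylinder_image_restrict_of_dependsOn hB]
  exact this

end ProductMeasure

open Finset

/-- A constraint on variables `V` with values in `α`, excluding the single partial assignment
`forbidden` on `scope`. The values of `forbidden` outside `scope` play no role. -/
structure Constraint (V α : Type*) where
  scope : Finset V
  forbidden : V → α

namespace Constraint

open MeasureTheory Measure ProbabilityTheory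

variable {V α ι : Type*}

/-- The assignments which agree with the forbidden one on the whole scope of `C`. -/
def violators (C : Constraint V α) : Set (V → α) :=
  (C.scope : Set V).pi fun v ↦ {C.forbidden v}

/-- Satisfiability of a CSP, encoded as an indexed family of constraints. -/
def Satisfiable (C : ι → Constraint V α) : Prop :=
  ∃ a : V → α, ∀ i, a ∉ (C i).violators

lemma dependsOn_mem_violators (C : Constraint V α) :
    DependsOn (· ∈ C.violators) (C.scope : Set V) := by
  intro a b hab
  exact propext <| forall₂_congr fun v hv ↦ by rw [hab v hv]

lemma dependsOn_mem_biInter_compl_violators [DecidableEq V] (C : ι → Constraint V α)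
    (S : Finset ι) :
    DependsOn (· ∈ ⋂ i ∈ S, (C i).violatorsᶜ) (↑(S.biUnion fun i ↦ (C i).scope) : Set V) := by
  intro a b hab
  simp only [Set.mem_iInter, Set.mem_compl_iff]
  refine propext <| forall₂_congr fun i hi ↦ not_congr <| Eq.to_iff ?_
  exact (C i).dependsOn_mem_violators fun v hv ↦ hab v (mem_biUnion.mpr ⟨i, hi, hv⟩)

/-- The law of a uniformly random assignment: the coordinates are independent and uniform. -/
noncomputable abbrev uniformAssignment (V α : Type*) [MeasurableSpace α] : Measure (V → α) :=
  infinitePi fun _ ↦ uniformOn Set.univ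

section Probability

lemma measurableSet_violators [MeasurableSpace α] [MeasurableSingletonClass α]
    (C : Constraint V α) : MeasurableSet C.violators :=
  MeasurableSet.pi C.scope.countable_toSet fun _ _ ↦ measurableSet_singleton _

instance isProbabilityMeasure_uniformOn_univ [Finite α] [Nonempty α] [MeasurableSpace α]
    [MeasurableSingletonClass α] : IsProbabilityMeasure (uniformOn (Set.univ : Set α)) :=
  isProbabilityMeasure_uniformOn Set.finite_univ Set.univ_nonempty

variable [Fintype α] [Nonempty α] [MeasurableSpace α] [MeasurableSingletonClass α]

lemma uniformAssignment_real_violators (C : Constraint V α) :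
    (uniformAssignment V α).real C.violators = ((Fintype.card α : ℝ) ^ #C.scope)⁻¹ := by
  rw [measureReal_def, violators, infinitePi_pi _ fun v _ ↦ measurableSet_singleton _]
  simp [uniformOn_univ]

lemma uniformAssignment_real_violators_inter (C : ι → Constraint V α) (i : ι)
    {S : Finset ι} (hS : ∀ j ∈ S, Disjoint (C i).scope (C j).scope) :
    (uniformAssignment V α).real ((C i).violators ∩ ⋂ j ∈ S, (C j).violatorsᶜ) =
      ((Fintype.card α : ℝ) ^ #(C i).scope)⁻¹ *
        (uniformAssignment V α).real (⋂ j ∈ S, (C j).violatorsᶜ) := by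
  classical
  rw [← uniformAssignment_real_violators, measureReal_def, measureReal_def, measureReal_def,
    ← ENNReal.toReal_mul]
  congr 1
  refine infinitePi_inter_of_dependsOn _ ((disjoint_biUnion_right _ _ _).mpr hS)
    (C i).dependsOn_mem_violators (dependsOn_mem_biInter_compl_violators C S)

end Probability

variable [DecidableEq V]

lemma exists_scope_eq_image_fst [Nonempty α] (P : Finset (V × α)) :
    ∃ C : Constraint V α, C.scope = P.image Prod.fst ∧ ∀ v ∈ C.scope, (v, C.forbidden v) ∈ P := by
  have h (v : V) : ∃ c, v ∈ P.image Prod.fst → (v, c) ∈ P := by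
    by_cases hv : v ∈ P.image Prod.fst
    · obtain ⟨⟨_, c⟩, hc, rfl⟩ := mem_image.mp hv
      exact ⟨c, fun _ ↦ hc⟩
    · exact ⟨Classical.arbitrary α, fun h ↦ absurd h hv⟩
  choose value hvalue using h
  exact ⟨⟨P.image Prod.fst, value⟩, rfl, hvalue⟩

/-- The constraint `C` restricted to the variables outside `X`, unless its scope has at least `ℓ`
variables in `X`; in that case `C` itself. -/
def prune (ℓ : ℕ) (X : Finset V) (C : Constraint V α) : Constraint V α where
  scope := if #(C.scope ∩ X) < ℓ then C.scope \ X else C.scope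
  forbidden := C.forbidden

lemma prune_scope_subset (ℓ : ℕ) (X : Finset V) (C : Constraint V α) :
    (prune ℓ X C).scope ⊆ C.scope := by
  grind [prune]

lemma card_scope_lt_card_prune_scope_add {ℓ : ℕ} (hℓ : 0 < ℓ) (X : Finset V)
    (C : Constraint V α) : #C.scope < #(prune ℓ X C).scope + ℓ := by
  have := card_sdiff_add_card_inter C.scope X
  grind [prune]

lemma le_card_scope_inter_of_mem_prune_scope {ℓ : ℕ} {X : Finset V} {C : Constraint V α} {v : V}
    (hv : v ∈ (prune ℓ X C).scope) (hvX : v ∈ X) : ℓ ≤ #(C.scope ∩ X) := by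
  grind [prune]

lemma Satisfiable.of_prune {ℓ : ℕ} {X : Finset V} {C : ι → Constraint V α}
    (h : Satisfiable fun i ↦ prune ℓ X (C i)) : Satisfiable C := by
  obtain ⟨a, ha⟩ := h
  exact ⟨a, fun i hai ↦ ha i fun v hv ↦ hai v (prune_scope_subset ℓ X (C i) hv)⟩

variable [Fintype ι]

theorem satisfiable_of_card_neighbors_lt [Fintype α] [Nonempty α] [DecidableEq ι]
    {C : ι → Constraint V α} {m D : ℕ} (hm : ∀ i, m ≤ #(C i).scope)
    (hD : ∀ i, #{j | j ≠ i ∧ ¬Disjoint (C i).scope (C j).scope} < D)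
    (hα : Real.exp 1 * D ≤ (Fintype.card α : ℝ) ^ m) : Satisfiable C := by
  let _ : MeasurableSpace α := ⊤
  have hcard : (1 : ℝ) ≤ Fintype.card α := by exact_mod_cast Fintype.card_pos
  have hpos : 0 < (uniformAssignment V α).real (⋂ i ∈ univ, (C i).violatorsᶜ) := by
    refine lovasz_local_lemma_symmetric (p := ((Fintype.card α : ℝ) ^ m)⁻¹)
      (fun i ↦ (C i).measurableSet_violators) hD ?_ (fun i S hi hS ↦ ?_) univ
    · rwa [mul_right_comm, ← div_eq_mul_inv, div_le_one (by positivity)]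
    · have hdisj : ∀ j ∈ S, Disjoint (C i).scope (C j).scope := fun j hj ↦ by
        by_contra h
        exact disjoint_left.mp hS (by simpa [h] using ne_of_mem_of_not_mem hj hi) hj
      rw [uniformAssignment_real_violators_inter C i hdisj]
      gcongr
      exact hm i
  obtain ⟨a, ha⟩ := nonempty_of_measureReal_ne_zero hpos.ne'
  exact ⟨a, by simpa using ha⟩

/-- The number of constraints whose scope contains `v`. -/
def degree (C : ι → Constraint V α) (v : V) : ℕ :=
  #{i | v ∈ (C i).scope}

lemma card_not_disjoint_le_sum_degree (C : ι → Constraint V α) (s : Finset V) :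
    #{i | ¬Disjoint s (C i).scope} ≤ ∑ v ∈ s, degree C v := by
  classical
  refine (card_le_card fun i hi ↦ ?_).trans card_biUnion_le
  simpa [not_disjoint_iff] using hi

theorem satisfiable_of_degree_le [Fintype α] [Nonempty α] {C : ι → Constraint V α} {m k b : ℕ}
    (hm₀ : 0 < m) (hm : ∀ i, m ≤ #(C i).scope) (hk : ∀ i, #(C i).scope ≤ k)
    (hb : ∀ v, degree C v ≤ b) (hα : Real.exp 1 * (k * b) ≤ (Fintype.card α : ℝ) ^ m) :
    Satisfiable C := by
  classical
  refine satisfiable_of_card_neighbors_lt (D := k * b) hm (fun i ↦ ?_) (by exact_mod_cast hα)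
  have hi : ¬Disjoint (C i).scope (C i).scope := by
    rw [disjoint_self_iff_empty, ← card_eq_zero]
    exact (hm₀.trans_le (hm i)).ne'
  calc #{j | j ≠ i ∧ ¬Disjoint (C i).scope (C j).scope}
      < #{j | ¬Disjoint (C i).scope (C j).scope} :=
        card_lt_card <| (ssubset_iff_of_subset (by grind)).mpr ⟨i, by
          simp only [mem_filter, mem_univ, true_and]
          exact ⟨hi, by simp⟩⟩
    _ ≤ ∑ v ∈ (C i).scope, degree C v := card_not_disjoint_le_sum_degree C _
    _ ≤ #(C i).scope * b := sum_le_card_nsmul _ _ _ fun v _ ↦ hb v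
    _ ≤ k * b := Nat.mul_le_mul_right b (hk i)

lemma degree_prune_le_degree (ℓ : ℕ) (X : Finset V) (C : ι → Constraint V α) (v : V) :
    degree (fun i ↦ prune ℓ X (C i)) v ≤ degree C v :=
  card_le_card <| monotone_filter_right _ fun i _ hi ↦ prune_scope_subset ℓ X (C i) hi

lemma degree_prune_le_choose {ℓ : ℕ} (hℓ : 0 < ℓ) {C : ι → Constraint V α}
    (hdisj : Pairwise fun i j ↦ #((C i).scope ∩ (C j).scope) < ℓ) {X : Finset V} {v : V}
    (hv : v ∈ X) :
    degree (fun i ↦ prune ℓ X (C i)) v ≤ (#X - 1).choose (ℓ - 1) := by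
  have hB (i : ι) (hi : v ∈ (prune ℓ X (C i)).scope) :
      ∃ B, {v} ⊆ B ∧ B ⊆ (C i).scope ∩ X ∧ #B = ℓ :=
    exists_subsuperset_card_eq
      (singleton_subset_iff.mpr (mem_inter.mpr ⟨prune_scope_subset ℓ X (C i) hi, hv⟩))
      (by rwa [card_singleton]) (le_card_scope_inter_of_mem_prune_scope hi hv)
  choose! B hvB hBX hBcard using hB
  rw [← card_erase_of_mem hv, ← card_powersetCard]
  refine card_le_card_of_injOn (fun i ↦ (B i).erase v) (fun i hi ↦ ?_) fun i hi j hj hij ↦ ?_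
  · have hi' := (mem_filter.mp hi).2
    have hvi := hvB i hi' (mem_singleton_self v)
    refine mem_powersetCard.mpr ⟨erase_subset_erase v ((hBX i hi').trans inter_subset_right), ?_⟩
    rw [card_erase_of_mem hvi, hBcard i hi']
  · have hi' := (mem_filter.mp hi).2
    have hj' := (mem_filter.mp hj).2
    have hBij : B i = B j := erase_injOn' v (hvB i hi' (mem_singleton_self v))
      (hvB j hj' (mem_singleton_self v)) hij
    by_contra hne
    refine (hdisj hne).not_ge ?_
    rw [← hBcard i hi']
    exact card_le_card <| subset_inter ((hBX i hi').trans inter_subset_left)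
      (hBij ▸ (hBX j hj').trans inter_subset_left)

/-- The frequent variables, with the threshold `D` on the degree left as a parameter. Taking them
inside the union of the scopes, which is no restriction when `0 ≤ D`, makes them a `Finset`. -/
noncomputable def frequentVars (C : ι → Constraint V α) (D : ℝ) : Finset V :=
  {v ∈ univ.biUnion fun i ↦ (C i).scope | D < degree C v}

lemma mem_frequentVars {C : ι → Constraint V α} {D : ℝ} (hD : 0 ≤ D) {v : V} :
    v ∈ frequentVars C D ↔ D < degree C v := by
  refine ⟨fun h ↦ (mem_filter.mp h).2, fun h ↦ mem_filter.mpr ⟨?_, h⟩⟩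
  have hdeg : 0 < degree C v := by exact_mod_cast hD.trans_lt h
  obtain ⟨i, hi⟩ := card_pos.mp hdeg
  exact mem_biUnion.mpr ⟨i, mem_univ i, (mem_filter.mp hi).2⟩

lemma card_frequentVars_mul_le {C : ι → Constraint V α} {k : ℕ} (hk : ∀ i, #(C i).scope ≤ k)
    (D : ℝ) : #(frequentVars C D) * D ≤ Fintype.card ι * k := by
  have := card_nsmul_le_card_nsmul (s := frequentVars C D) (t := univ) (m := D) (n := (k : ℝ))
    (fun v i ↦ v ∈ (C i).scope) (fun v hv ↦ (mem_filter.mp hv).2.le) fun i _ ↦ by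
      refine Nat.cast_le.mpr (le_trans (card_le_card fun v hv ↦ ?_) (hk i))
      exact ((mem_bipartiteBelow _).mp hv).2
  simpa using this

section UniformDisjoint

variable [Fintype α] [Nonempty α] {k ℓ : ℕ} {C : ι → Constraint V α}

theorem satisfiable_of_card_pow_le (hℓ : 0 < ℓ) (hℓk : ℓ ≤ k) (hcard : ∀ i, #(C i).scope = k)
    (hdisj : Pairwise fun i j ↦ #((C i).scope ∩ (C j).scope) < ℓ) {b : ℕ}
    (hα : Real.exp 1 * (k * b) ≤ (Fintype.card α : ℝ) ^ (k - ℓ + 1)) {X : Finset V}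
    (hX : #X ^ (ℓ - 1) ≤ b) (hdeg : ∀ v ∉ X, degree C v ≤ b) : Satisfiable C := by
  refine Satisfiable.of_prune (ℓ := ℓ) (X := X) <| satisfiable_of_degree_le (k - ℓ).succ_pos
    (fun i ↦ ?_) (fun i ↦ ?_) (fun v ↦ ?_) hα
  · have := card_scope_lt_card_prune_scope_add hℓ X (C i)
    grind
  · exact (card_le_card (prune_scope_subset ℓ X (C i))).trans (hcard i).le
  · by_cases hv : v ∈ X
    · calc degree (fun i ↦ prune ℓ X (C i)) v ≤ (#X - 1).choose (ℓ - 1) :=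
            degree_prune_le_choose hℓ hdisj hv
        _ ≤ (#X - 1) ^ (ℓ - 1) := Nat.choose_le_pow _ _
        _ ≤ #X ^ (ℓ - 1) := by gcongr; exact Nat.sub_le _ _
        _ ≤ b := hX
    · exact (degree_prune_le_degree ℓ X C v).trans (hdeg v hv)

theorem rpow_inv_lt_card_frequentVars (hℓ : 2 ≤ ℓ) (hℓk : ℓ ≤ k) (hcard : ∀ i, #(C i).scope = k)
    (hdisj : Pairwise fun i j ↦ #((C i).scope ∩ (C j).scope) < ℓ) {D : ℝ} (hD : 0 ≤ D)
    (hα : Real.exp 1 * (k * D) ≤ (Fintype.card α : ℝ) ^ (k - ℓ + 1)) (hC : ¬Satisfiable C) :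
    D ^ ((ℓ : ℝ) - 1)⁻¹ < #(frequentVars C D) := by
  contrapose! hC
  have hℓ' : ((ℓ - 1 : ℕ) : ℝ) = ℓ - 1 := by push_cast [show 1 ≤ ℓ by omega]; rfl
  have hX : (#(frequentVars C D) : ℝ) ^ (ℓ - 1) ≤ D := by
    rw [← hℓ'] at hC
    calc (#(frequentVars C D) : ℝ) ^ (ℓ - 1) ≤ (D ^ ((ℓ - 1 : ℕ) : ℝ)⁻¹) ^ (ℓ - 1) := by gcongr
      _ = D := Real.rpow_inv_natCast_pow hD (by omega)
  refine satisfiable_of_card_pow_le (b := ⌊D⌋₊) (X := frequentVars C D) (by omega) hℓk hcard hdisj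
    (le_trans ?_ hα) (Nat.le_floor (by exact_mod_cast hX)) fun v hv ↦ Nat.le_floor ?_
  · gcongr
    exact Nat.floor_le hD
  · exact not_lt.mp fun h ↦ hv ((mem_frequentVars hD).mpr h)

theorem rpow_lt_card_mul (hℓ : 2 ≤ ℓ) (hℓk : ℓ ≤ k) (hcard : ∀ i, #(C i).scope = k)
    (hdisj : Pairwise fun i j ↦ #((C i).scope ∩ (C j).scope) < ℓ) {D : ℝ} (hD : 0 < D)
    (hα : Real.exp 1 * (k * D) ≤ (Fintype.card α : ℝ) ^ (k - ℓ + 1)) (hC : ¬Satisfiable C) :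
    D ^ (1 + ((ℓ : ℝ) - 1)⁻¹) < Fintype.card ι * k :=
  calc D ^ (1 + ((ℓ : ℝ) - 1)⁻¹) = D ^ ((ℓ : ℝ) - 1)⁻¹ * D := by
        rw [Real.rpow_add hD, Real.rpow_one, mul_comm]
    _ < #(frequentVars C D) * D := by
        gcongr
        exact rpow_inv_lt_card_frequentVars hℓ hℓk hcard hdisj hD.le hα hC
    _ ≤ Fintype.card ι * k := card_frequentVars_mul_le (fun i ↦ (hcard i).le) D

end UniformDisjoint

end Constraint

theorem stmt9_general {V α : Type*} [DecidableEq V] [Fintype α] [Nonempty α] {k ℓ : ℕ}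
    (hℓ : 2 ≤ ℓ) (hℓk : ℓ ≤ k) (F : Finset (Finset (V × α)))
    (hcard : ∀ C ∈ F, #(C.image Prod.fst) = k)
    (hdisj : ∀ C ∈ F, ∀ D ∈ F, C ≠ D → #(C.image Prod.fst ∩ D.image Prod.fst) < ℓ)
    (hunsat : ∀ a : V → α, ∃ C ∈ F, ∀ p ∈ C, a p.1 = p.2) :
    (1 / (k : ℝ)) * ((Fintype.card α : ℝ) ^ k /
        (Real.exp 1 * (Fintype.card α : ℝ) ^ (ℓ - 1) * k)) ^ (1 + ((ℓ : ℝ) - 1)⁻¹) < #F := by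
  have hk : (0 : ℝ) < k := by exact_mod_cast (by omega : 0 < k)
  choose 𝒞 hscope hforbidden using fun C : F ↦ Constraint.exists_scope_eq_image_fst C.1
  have h𝒞 : ¬Constraint.Satisfiable 𝒞 := fun ⟨a, ha⟩ ↦ by
    obtain ⟨C, hC, haC⟩ := hunsat a
    exact ha ⟨C, hC⟩ fun v hv ↦ haC _ (hforbidden ⟨C, hC⟩ v hv)
  have hpow : (Fintype.card α : ℝ) ^ k =
      (Fintype.card α : ℝ) ^ (k - ℓ + 1) * (Fintype.card α : ℝ) ^ (ℓ - 1) := by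
    rw [← pow_add]
    congr 1
    omega
  have h𝒞disj : Pairwise fun C D ↦ #((𝒞 C).scope ∩ (𝒞 D).scope) < ℓ := fun C D hCD ↦ by
    simpa only [hscope] using hdisj C C.2 D D.2 (Subtype.coe_ne_coe.mpr hCD)
  have := Constraint.rpow_lt_card_mul hℓ hℓk (fun C ↦ hscope C ▸ hcard C C.2) h𝒞disj
    (D := (Fintype.card α : ℝ) ^ k / (Real.exp 1 * (Fintype.card α : ℝ) ^ (ℓ - 1) * k))
    (by positivity) (le_of_eq (by rw [hpow]; field_simp)) h𝒞
  rwa [one_div, inv_mul_lt_iff₀ hk, mul_comm (k : ℝ), ← Fintype.card_coe]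

/-- Every unsatisfiable ℓ-disjoint (k,d)-CSP has more than
(1/k)·(d^k/(e·d^{ℓ-1}·k))^{1+1/(ℓ-1)} constraints. -/
theorem stmt9 {V : Type*} [DecidableEq V] (k d ℓ : ℕ) (hℓ : 2 ≤ ℓ) (hlk : ℓ ≤ k)
    (hd : 2 ≤ d)
    (F : Finset (Finset (V × Fin d)))
    (hcard : ∀ C ∈ F, C.card = k ∧ (C.image Prod.fst).card = k)
    (hdisj : ∀ C ∈ F, ∀ D ∈ F, C ≠ D → ((C.image Prod.fst) ∩ (D.image Prod.fst)).card < ℓ)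
    (hunsat : ∀ α : V → Fin d, ∃ C ∈ F, ∀ p ∈ C, α p.1 = p.2) :
    (1 / (k : ℝ)) * ((d : ℝ) ^ k / (Real.exp 1 * (d : ℝ) ^ (ℓ - 1) * k))
        ^ (1 + ((ℓ : ℝ) - 1)⁻¹)
      < F.card := by
  have : Nonempty (Fin d) := ⟨0, by omega⟩
  simpa using stmt9_general hℓ hlk F (fun C hC ↦ (hcard C hC).2) hdisj hunsat
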